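/- arXiv:1201.2715 — 2 statements merged into one kernel-verified Lean document; each statement's English description precedes it below -/
import Mathlib

section
/- Consider the balancing circuit model on a graph G on n vertices with round matrix satisfying λ(M) < 1, and run the discrete process with independent uniformly random orientations from an initial vector x^{(0)} ∈ ℤ^n with discrepancy at most K. Then for all sufficiently large n, after t = τ_cont(K,1) rounds, with probability at least 1 − 2n^{−2} the discrepancy of x^{(t)} is at most 12√(log n) + 1. -/
/-!
Against a fixed test vector `y`, the deviation of the discrete process from the continuous one
satisfies `D_{t+1} · y = D_t · (M y) + e · y`, where the rounding error `e` is a sum of independent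
random signs over the matched pairs. Averaging with the matching matrix `M` loses exactly
`∑ (y_u - y_v)² / 2` of the squared norm of `y`, which pays for the exponential moment of `e · y`.
Hence `E exp (D_t · y) ≤ exp (‖y‖² / 4)` for every `t`, independently of the matchings, and a
Chernoff bound followed by a union bound shows that all entries of `D_t` are at most `6 √(log n)`
in absolute value, except with probability at most `2 n^{-35}`. Smoothing controls the continuous
process; a smoothing time exists since `λ(M) < 1` makes the powers of the round matrix contract the
vectors orthogonal to the constants.
-/

namespace LB


/-- A matching on the vertex set `Fin n`, encoded as an involution;
`f u = u` means that `u` is unmatched, and `f u = v ≠ u` means `{u,v}`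
is an edge of the matching. -/
structure Matching (n : ℕ) where
  f : Fin n → Fin n
  invol : ∀ u, f (f u) = u

/-- The matching matrix of a matching: entries `1/2` at `(u,u)`, `(u,v)`, `(v,u)`, `(v,v)`
for matched pairs `{u,v}`, entry `1` at `(w,w)` for unmatched `w`, and `0` otherwise. -/
noncomputable def Matching.matrix {n : ℕ} (m : Matching n) : Matrix (Fin n) (Fin n) ℝ :=
  Matrix.of fun u v =>
    if m.f u = u then (if v = u then 1 else 0)
    else if v = u ∨ v = m.f u then (1 : ℝ) / 2 else 0

/-- `M^{[t₁,t₂]} = M^{(t₁)} * ⋯ * M^{(t₂)}` (the identity matrix if `t₁ > t₂`). -/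
noncomputable def prodMatrix {n : ℕ} (M : ℕ → Matching n) (t₁ t₂ : ℕ) : Matrix (Fin n) (Fin n) ℝ :=
  ((List.range' t₁ (t₂ + 1 - t₁)).map fun s => (M s).matrix).prod

/-- Sum of `g u v` over the matched pairs `[u:v]` (i.e. `{u,v}` in the matching with `u < v`). -/
noncomputable def pairSum {n : ℕ} (m : Matching n) (g : Fin n → Fin n → ℝ) : ℝ :=
  ∑ u : Fin n, if u < m.f u then g u (m.f u) else 0

/-- The discrepancy `max_{u,v} |x_u - x_v|` of a load vector. -/
noncomputable def disc {n : ℕ} (x : Fin n → ℝ) : ℝ :=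
  ⨆ u : Fin n, ⨆ v : Fin n, |x u - x v|

/-- Discrepancy of an integer load vector. -/
noncomputable def discZ {n : ℕ} (x : Fin n → ℤ) : ℝ := disc fun u => (x u : ℝ)

/-- The time interval `[t₁,t₂]` (with its matchings) is `(K,ε)`-smoothing. -/
def IsSmoothing {n : ℕ} (M : ℕ → Matching n) (t₁ t₂ : ℕ) (K ε : ℝ) : Prop :=
  ∀ ξ : Fin n → ℝ, disc ξ ≤ K → disc (Matrix.vecMul ξ (prodMatrix M (t₁ + 1) t₂)) ≤ ε

/-- `τ_cont(K,ε)`: the minimum `t` such that `[0,t]` is `(K,ε)`-smoothing. -/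
noncomputable def tauCont {n : ℕ} (M : ℕ → Matching n) (K ε : ℝ) : ℕ :=
  sInf {t : ℕ | IsSmoothing M 0 t K ε}

/-- One round of the discrete process: two matched nodes split their total load,
the node indicated by the orientation bit (stored at the pair `(min,max)`) receiving
the excess token; `φ u v = true` for `u < v` means the excess token goes to `u`. -/
def step {n : ℕ} (m : Matching n) (φ : Fin n → Fin n → Bool) (x : Fin n → ℤ) :
    Fin n → ℤ := fun u =>
  if m.f u = u then x u
  else if u < m.f u then
    (if φ u (m.f u) then Int.ediv (x u + x (m.f u) + 1) 2
     else Int.ediv (x u + x (m.f u)) 2)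
  else
    (if φ (m.f u) u then Int.ediv (x u + x (m.f u)) 2
     else Int.ediv (x u + x (m.f u) + 1) 2)

/-- The discrete process started at round `t₁` from load vector `x`:
`loadsFrom M t₁ Φ x r` is the load vector `r` rounds later; the `(r+1)`-st
step uses the matching `M (t₁+r+1)` and the orientations `Φ (r+1)`. -/
def loadsFrom {n : ℕ} (M : ℕ → Matching n) (t₁ : ℕ) (Φ : ℕ → Fin n → Fin n → Bool)
    (x : Fin n → ℤ) : ℕ → Fin n → ℤ
  | 0 => x
  | r + 1 => step (M (t₁ + r + 1)) (Φ (r + 1)) (loadsFrom M t₁ Φ x r)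

/-- The discrete process started at round `0`; round `t ≥ 1` uses matching `M t`. -/
def loads {n : ℕ} (M : ℕ → Matching n) (Φ : ℕ → Fin n → Fin n → Bool)
    (x : Fin n → ℤ) : ℕ → Fin n → ℤ := loadsFrom M 0 Φ x

/-- Extend a finite family of random choices (one for each of the rounds `1,…,T`)
to all rounds: round `s` reads index `s-1`. -/
def lift {A : Type*} (a₀ : A) {T : ℕ} (ω : Fin T → A) : ℕ → A := fun s =>
  if h : s - 1 < T then ω ⟨s - 1, h⟩ else a₀

/-- Default (irrelevant) orientation. -/
def orientDefault (n : ℕ) : Fin n → Fin n → Bool := fun _ _ => true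

/-- Probability of an event under the uniform distribution on a finite sample space;
this makes all the per-round random choices independent and uniform. -/
noncomputable def pr {Ω : Type*} [Fintype Ω] (A : Ω → Prop) : ℝ :=
  haveI := Classical.decPred A
  ((Finset.univ.filter A).card : ℝ) / (Fintype.card Ω : ℝ)

/-- Expectation under the uniform distribution on a finite sample space. -/
noncomputable def ex {Ω : Type*} [Fintype Ω] (Z : Ω → ℝ) : ℝ :=
  (∑ ω : Ω, Z ω) / (Fintype.card Ω : ℝ)

/-- `λ(M) = max{|λ₂(M)|, |λ_n(M)|}` for a symmetric doubly stochastic matrix `M`,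
characterized as the operator norm of `M` on the subspace orthogonal to `𝟙`. -/
noncomputable def lamMax {n : ℕ} (M : Matrix (Fin n) (Fin n) ℝ) : ℝ :=
  ⨆ x : {x : Fin n → ℝ // (∑ u, x u) = 0 ∧ (∑ u, (x u) ^ 2) = 1},
    Real.sqrt (∑ u, (M.mulVec x.1 u) ^ 2)

/-- The round matrix `M = M^{(1)} ⋯ M^{(d)}` of the balancing circuit. -/
noncomputable def roundMatrix {n d : ℕ} (Ms : Fin d → Matching n) : Matrix (Fin n) (Fin n) ℝ :=
  (List.ofFn fun i => (Ms i).matrix).prod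

/-- The periodic sequence of matchings of the balancing circuit:
round `t` uses `M^{(((t-1) mod d)+1)}`. -/
def circuit {n d : ℕ} (hd : 0 < d) (Ms : Fin d → Matching n) : ℕ → Matching n :=
  fun t => Ms ⟨(t - 1) % d, Nat.mod_lt _ hd⟩

section Development

open Filter Topology
open scoped Matrix BigOperators

/-! ### Uniform expectations and probabilities -/

section Uniform

variable {ι α Ω : Type*} [Fintype ι] [Fintype α] [Fintype Ω]

theorem expect_prod_eval {𝕜 : Type*} [Field 𝕜] [CharZero 𝕜] [DecidableEq ι] (f : ι → α → 𝕜) :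
    𝔼 ω : ι → α, ∏ i, f i (ω i) = ∏ i, 𝔼 a, f i a := by
  simp only [Fintype.expect_eq_sum_div_card, Finset.prod_div_distrib, Finset.prod_univ_sum,
    Fintype.piFinset_univ, Fintype.card_fun, Nat.cast_pow, Finset.prod_const, Finset.card_univ]

theorem expect_eval {E : Type*} [AddCommMonoid E] [Module ℚ≥0 E] [DecidableEq ι] [Nonempty α]
    (i : ι) (f : α → E) : 𝔼 ω : ι → α, f (ω i) = 𝔼 a, f a := by
  rw [Fintype.expect_equiv (Equiv.funSplitAt i α) (fun ω => f (ω i)) (fun p => f p.1) fun _ => rfl,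
    ← Finset.univ_product_univ, Finset.expect_product]
  simp only [Fintype.expect_const]

theorem expect_fin_succ_fun {E : Type*} [AddCommMonoid E] [Module ℚ≥0 E] {T : ℕ}
    (f : (Fin (T + 1) → α) → E) :
    𝔼 ω, f ω = 𝔼 ω : Fin T → α, 𝔼 a, f (Fin.snoc ω a) := by
  rw [← Fintype.expect_equiv (Fin.snocEquiv fun _ => α) (fun p => f (Fin.snoc p.2 p.1)) f
      fun _ => rfl, ← Finset.univ_product_univ, Finset.expect_product, Finset.expect_comm]

theorem pr_eq_expect_indicator (A : Ω → Prop) : pr A = 𝔼 ω, {ω | A ω}.indicator 1 ω := by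
  classical
  simp only [pr, Fintype.expect_eq_sum_div_card, Set.indicator_apply, Set.mem_ofPred_eq,
    Pi.one_apply, Finset.sum_boole]

theorem pr_le_expect {A : Ω → Prop} {f : Ω → ℝ} (hf : ∀ ω, 0 ≤ f ω) (hA : ∀ ω, A ω → 1 ≤ f ω) :
    pr A ≤ 𝔼 ω, f ω := by
  rw [pr_eq_expect_indicator]
  exact Finset.expect_le_expect fun ω _ => Set.indicator_le' hA (fun ω _ => hf ω) ω

theorem pr_mono {A B : Ω → Prop} (h : ∀ ω, A ω → B ω) : pr A ≤ pr B := by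
  rw [pr_eq_expect_indicator, pr_eq_expect_indicator]
  exact Finset.expect_le_expect fun ω _ =>
    Set.indicator_le_indicator_of_subset h (fun _ => zero_le_one) ω

theorem pr_not [Nonempty Ω] (A : Ω → Prop) : pr (fun ω => ¬A ω) = 1 - pr A := by
  rw [pr_eq_expect_indicator, pr_eq_expect_indicator, ← Set.compl_ofPred, Set.indicator_compl]
  simp only [Pi.sub_apply, Pi.one_apply, Finset.expect_sub_distrib, Fintype.expect_const]

theorem pr_exists_le (A : ι → Ω → Prop) : pr (fun ω => ∃ i, A i ω) ≤ ∑ i, pr (A i) := by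
  have indicator_nonneg (i : ι) (ω : Ω) : (0 : ℝ) ≤ {ω | A i ω}.indicator 1 ω :=
    Set.indicator_nonneg (fun _ _ => zero_le_one) ω
  simp only [pr_eq_expect_indicator (A _), ← Finset.expect_sum_comm]
  refine pr_le_expect (fun ω => Finset.sum_nonneg fun i _ => indicator_nonneg i ω) ?_
  rintro ω ⟨i, hi⟩
  calc (1 : ℝ) = {ω | A i ω}.indicator 1 ω := (Set.indicator_of_mem (s := {ω | A i ω}) hi 1).symm
    _ ≤ ∑ i, {ω | A i ω}.indicator 1 ω :=
      Finset.single_le_sum (fun i _ => indicator_nonneg i ω) (Finset.mem_univ i)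

theorem pr_lt_abs_le {Z : Ω → ℝ} {c δ : ℝ} (hc : 0 < c) (hδ : 0 ≤ δ)
    (hZ : ∀ l : ℝ, 𝔼 ω, Real.exp (l * Z ω) ≤ Real.exp (c * l ^ 2 / 2)) :
    pr (fun ω => δ < |Z ω|) ≤ 2 * Real.exp (-(δ ^ 2 / (2 * c))) := by
  -- The exponent `c l² / 2 - l δ` of the Chernoff bound is minimal at `l = δ / c`.
  set l := δ / c with hl
  have markov : pr (fun ω => δ < |Z ω|) ≤
      𝔼 ω, Real.exp (-(l * δ)) * (Real.exp (l * Z ω) + Real.exp (-l * Z ω)) := by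
    refine pr_le_expect (fun ω => by positivity) fun ω hω => ?_
    have hlω : 0 ≤ l * (|Z ω| - δ) := mul_nonneg (by positivity) (sub_nonneg.2 hω.le)
    rw [mul_add, ← Real.exp_add, ← Real.exp_add]
    rcases abs_cases (Z ω) with ⟨h, -⟩ | ⟨h, -⟩ <;> rw [h] at hlω
    · exact (Real.one_le_exp (by linarith)).trans (le_add_of_nonneg_right (Real.exp_pos _).le)
    · exact (Real.one_le_exp (by linarith)).trans (le_add_of_nonneg_left (Real.exp_pos _).le)
  calc pr (fun ω => δ < |Z ω|)
      ≤ Real.exp (-(l * δ)) * (𝔼 ω, Real.exp (l * Z ω) + 𝔼 ω, Real.exp (-l * Z ω)) := by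
        rwa [← Finset.expect_add_distrib, Finset.mul_expect]
    _ ≤ Real.exp (-(l * δ)) * (Real.exp (c * l ^ 2 / 2) + Real.exp (c * (-l) ^ 2 / 2)) := by
        gcongr <;> apply hZ
    _ = 2 * Real.exp (-(δ ^ 2 / (2 * c))) := by
        rw [neg_sq, ← two_mul, mul_left_comm, ← Real.exp_add]
        congr 2
        rw [hl]
        field_simp
        ring

end Uniform

/-! ### Matching matrices -/

variable {n : ℕ}

theorem pairSum_mono (m : Matching n) {g h : Fin n → Fin n → ℝ} (hgh : ∀ u v, g u v ≤ h u v) :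
    pairSum m g ≤ pairSum m h := by
  unfold pairSum
  gcongr with u
  split_ifs
  exacts [hgh _ _, le_rfl]

theorem pairSum_div (m : Matching n) (g : Fin n → Fin n → ℝ) (c : ℝ) :
    pairSum m (fun u v => g u v / c) = pairSum m g / c := by
  simp only [pairSum, Finset.sum_div, ite_div, zero_div]

namespace Matching

theorem sum_eq_pairSum (m : Matching n) {h : Fin n → ℝ} (h_fixed : ∀ u, m.f u = u → h u = 0) :
    ∑ u, h u = pairSum m fun u v => h u + h v := by
  have swap : ∑ u, (if m.f u < u then h u else 0) = ∑ u, if u < m.f u then h (m.f u) else 0 := by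
    have involutive : Function.Involutive m.f := m.invol
    refine Fintype.sum_equiv involutive.toPerm _ _ fun u => ?_
    rw [Function.Involutive.coe_toPerm, m.invol]
  have split : ∀ u, h u = (if u < m.f u then h u else 0) + if m.f u < u then h u else 0 := by
    intro u
    rcases lt_trichotomy u (m.f u) with hu | hu | hu
    · simp [hu, hu.not_gt]
    · simp [h_fixed u hu.symm]
    · simp [hu, hu.not_gt]
  rw [Finset.sum_congr rfl fun u _ => split u, Finset.sum_add_distrib, swap,
    ← Finset.sum_add_distrib, pairSum]
  exact Finset.sum_congr rfl fun u _ => by split_ifs <;> simp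

theorem mulVec_matrix_apply (m : Matching n) (y : Fin n → ℝ) (u : Fin n) :
    (m.matrix *ᵥ y) u = (y u + y (m.f u)) / 2 := by
  by_cases hu : m.f u = u
  · simp [matrix, Matrix.mulVec, dotProduct, hu]
  · have entry (v : Fin n) : m.matrix u v =
        (if v = u then 1 / 2 else 0) + if v = m.f u then 1 / 2 else 0 := by
      simp only [matrix, Matrix.of_apply]
      grind
    simp only [Matrix.mulVec, dotProduct, entry, add_mul, ite_mul, zero_mul,
      Finset.sum_add_distrib, Finset.sum_ite_eq', Finset.mem_univ, if_true]
    ring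

theorem matrix_isSymm (m : Matching n) : m.matrix.IsSymm := by
  ext u v
  simp only [matrix, Matrix.transpose_apply, Matrix.of_apply]
  grind [m.invol u, m.invol v]

theorem vecMul_matrix (m : Matching n) (y : Fin n → ℝ) : y ᵥ* m.matrix = m.matrix *ᵥ y := by
  rw [← Matrix.mulVec_transpose, m.matrix_isSymm]

theorem matrix_mem_doublyStochastic (m : Matching n) : m.matrix ∈ doublyStochastic ℝ (Fin n) := by
  have mulVec_one : m.matrix *ᵥ 1 = 1 := by
    ext u
    norm_num [mulVec_matrix_apply]
  refine mem_doublyStochastic.2 ⟨fun u v => ?_, mulVec_one, by rwa [vecMul_matrix]⟩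
  simp only [matrix, Matrix.of_apply]
  positivity

theorem sum_sq_sub_sum_sq_mulVec_matrix (m : Matching n) (y : Fin n → ℝ) :
    ∑ u, y u ^ 2 - ∑ u, (m.matrix *ᵥ y) u ^ 2 = pairSum m fun u v => (y u - y v) ^ 2 / 2 := by
  simp only [← Finset.sum_sub_distrib, mulVec_matrix_apply]
  rw [m.sum_eq_pairSum fun u hu => by rw [hu]; ring]
  simp only [pairSum, m.invol]
  refine Finset.sum_congr rfl fun u _ => ?_
  congr 1
  ring

end Matching

/-! ### Rounding errors -/

/-- The orientation `Φ ∈ {−1, +1}` encoded by an orientation bit. -/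
def orientSign (b : Bool) : ℝ := if b then 1 else -1

theorem expect_exp_orientSign_mul_le (c : ℝ) :
    𝔼 b, Real.exp (orientSign b * c) ≤ Real.exp (c ^ 2 / 2) := by
  refine le_of_eq_of_le ?_ (Real.cosh_le_exp_half_sq c)
  simp [Fintype.expect_eq_sum_div_card, -Fintype.univ_bool, Fintype.sum_bool, orientSign,
    Real.cosh_eq]

theorem expect_exp_pairSum_orientSign_mul_le (m : Matching n) (c : Fin n → Fin n → ℝ) :
    𝔼 φ : Fin n → Fin n → Bool, Real.exp (pairSum m fun u v => orientSign (φ u v) * c u v) ≤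
      Real.exp (pairSum m fun u v => c u v ^ 2 / 2) := by
  simp only [pairSum, Real.exp_sum]
  rw [expect_prod_eval fun u (b : Fin n → Bool) =>
    Real.exp (if u < m.f u then orientSign (b (m.f u)) * c u (m.f u) else 0)]
  refine Finset.prod_le_prod (fun u _ => Finset.expect_nonneg fun b _ => (Real.exp_pos _).le)
    fun u _ => ?_
  split_ifs with hu
  · rw [expect_eval (m.f u) fun b => Real.exp (orientSign b * c u (m.f u))]
    exact expect_exp_orientSign_mul_le _
  · rw [Fintype.expect_const]

namespace Matching

/-- The error vector `e` of one round of the discrete process: the loads after the round minus the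
loads that the continuous process would produce from the same vector. -/
noncomputable def roundingError (m : Matching n) (φ : Fin n → Fin n → Bool) (x : Fin n → ℤ) :
    Fin n → ℝ :=
  (fun u => (step m φ x u : ℝ)) - m.matrix *ᵥ fun u => (x u : ℝ)

theorem roundingError_apply_of_fixed (m : Matching n) (φ : Fin n → Fin n → Bool) (x : Fin n → ℤ)
    {u : Fin n} (hu : m.f u = u) : m.roundingError φ x u = 0 := by
  simp [roundingError, step, mulVec_matrix_apply, hu]

theorem roundingError_apply_of_lt (m : Matching n) (φ : Fin n → Fin n → Bool) (x : Fin n → ℤ)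
    {u : Fin n} (hu : u < m.f u) :
    m.roundingError φ x u =
      orientSign (φ u (m.f u)) * (((x u + x (m.f u)) % 2 : ℤ) / 2) := by
  have two_mul_step : 2 * step m φ x u = x u + x (m.f u) +
      (if φ u (m.f u) then 1 else -1) * ((x u + x (m.f u)) % 2) := by
    simp only [step, hu.ne', hu, if_true, if_false]
    split_ifs <;> simp only [← Int.div_def] <;> omega
  have two_mul_step_real := congrArg (Int.cast : ℤ → ℝ) two_mul_step
  push_cast at two_mul_step_real
  simp only [roundingError, Pi.sub_apply, mulVec_matrix_apply, orientSign]
  linarith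

theorem step_add_step_partner (m : Matching n) (φ : Fin n → Fin n → Bool) (x : Fin n → ℤ)
    {u : Fin n} (hu : u < m.f u) : step m φ x u + step m φ x (m.f u) = x u + x (m.f u) := by
  simp only [step, m.invol, hu.ne, hu.ne', hu, hu.not_gt, if_true, if_false]
  split_ifs <;> simp only [← Int.div_def] <;> omega

theorem roundingError_apply_partner (m : Matching n) (φ : Fin n → Fin n → Bool) (x : Fin n → ℤ)
    {u : Fin n} (hu : u < m.f u) : m.roundingError φ x (m.f u) = -m.roundingError φ x u := by
  have conserved := congrArg (Int.cast : ℤ → ℝ) (m.step_add_step_partner φ x hu)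
  push_cast at conserved
  simp only [roundingError, Pi.sub_apply, mulVec_matrix_apply, m.invol]
  linarith

theorem roundingError_dotProduct (m : Matching n) (φ : Fin n → Fin n → Bool) (x : Fin n → ℤ)
    (y : Fin n → ℝ) :
    m.roundingError φ x ⬝ᵥ y = pairSum m fun u v =>
      orientSign (φ u v) * (((x u + x v) % 2 : ℤ) / 2 * (y u - y v)) := by
  rw [dotProduct,
    m.sum_eq_pairSum fun u hu => by rw [m.roundingError_apply_of_fixed φ x hu, zero_mul]]
  refine Finset.sum_congr rfl fun u _ => ?_
  split_ifs with hu
  · simp only [m.roundingError_apply_partner φ x hu, m.roundingError_apply_of_lt φ x hu]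
    ring
  · rfl

theorem expect_exp_roundingError_dotProduct_le (m : Matching n) (x : Fin n → ℤ) (y : Fin n → ℝ) :
    𝔼 φ, Real.exp (m.roundingError φ x ⬝ᵥ y) ≤
      Real.exp ((∑ u, y u ^ 2 - ∑ u, (m.matrix *ᵥ y) u ^ 2) / 4) := by
  simp only [roundingError_dotProduct]
  refine (expect_exp_pairSum_orientSign_mul_le m _).trans (Real.exp_le_exp.2 ?_)
  rw [sum_sq_sub_sum_sq_mulVec_matrix, ← pairSum_div]
  refine pairSum_mono m fun u v => ?_
  rcases Int.emod_two_eq_zero_or_one (x u + x v) with h | h <;> rw [h] <;> push_cast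
  · nlinarith [sq_nonneg (y u - y v)]
  · exact le_of_eq (by ring)

end Matching

/-! ### The deviation from the continuous process -/

section Deviation

variable (M : ℕ → Matching n)

theorem prodMatrix_one_succ (T : ℕ) :
    prodMatrix M 1 (T + 1) = prodMatrix M 1 T * (M (T + 1)).matrix := by
  simp [prodMatrix, List.range'_concat, add_comm]

theorem loads_succ (Φ : ℕ → Fin n → Fin n → Bool) (x : Fin n → ℤ) (T : ℕ) :
    loads M Φ x (T + 1) = step (M (T + 1)) (Φ (T + 1)) (loads M Φ x T) := by
  simp only [loads, loadsFrom, zero_add]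

theorem loads_congr {Φ Ψ : ℕ → Fin n → Fin n → Bool} (x : Fin n → ℤ) {T : ℕ}
    (h : ∀ s ∈ Set.Icc 1 T, Φ s = Ψ s) : loads M Φ x T = loads M Ψ x T := by
  induction T with
  | zero => rfl
  | succ T ih =>
    rw [loads_succ, loads_succ, h (T + 1) ⟨by simp, le_rfl⟩,
      ih fun s hs => h s ⟨hs.1, hs.2.trans T.le_succ⟩]

theorem lift_snoc_of_mem_Icc {A : Type*} (a₀ : A) {T : ℕ} (ω : Fin T → A) (a : A) {s : ℕ}
    (hs : s ∈ Set.Icc 1 T) : lift a₀ (Fin.snoc ω a : Fin (T + 1) → A) s = lift a₀ ω s := by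
  obtain ⟨h1, hT⟩ := hs
  have hlt : s - 1 < T := by omega
  simp [lift, hlt, hlt.trans T.lt_succ_self, Fin.snoc]

theorem lift_snoc_succ {A : Type*} (a₀ : A) {T : ℕ} (ω : Fin T → A) (a : A) :
    lift a₀ (Fin.snoc ω a : Fin (T + 1) → A) (T + 1) = a := by
  simp [lift, Fin.snoc]

/-- The deviation of the discrete process after round `T` from the continuous process started at
the same load vector. -/
noncomputable def deviation (Φ : ℕ → Fin n → Fin n → Bool) (x : Fin n → ℤ) (T : ℕ) : Fin n → ℝ :=
  (fun u => (loads M Φ x T u : ℝ)) - (fun u => (x u : ℝ)) ᵥ* prodMatrix M 1 T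

theorem deviation_zero (Φ : ℕ → Fin n → Fin n → Bool) (x : Fin n → ℤ) : deviation M Φ x 0 = 0 := by
  simp [deviation, loads, loadsFrom, prodMatrix]

theorem deviation_succ (Φ : ℕ → Fin n → Fin n → Bool) (x : Fin n → ℤ) (T : ℕ) :
    deviation M Φ x (T + 1) =
      deviation M Φ x T ᵥ* (M (T + 1)).matrix +
        (M (T + 1)).roundingError (Φ (T + 1)) (loads M Φ x T) := by
  rw [deviation, deviation, Matching.roundingError, prodMatrix_one_succ, loads_succ,
    Matrix.sub_vecMul, Matrix.vecMul_vecMul, Matching.vecMul_matrix]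
  abel

theorem deviation_lift_snoc_dotProduct (φ₀ : Fin n → Fin n → Bool) (x : Fin n → ℤ) {T : ℕ}
    (ω : Fin T → Fin n → Fin n → Bool) (φ : Fin n → Fin n → Bool) (y : Fin n → ℝ) :
    deviation M (lift φ₀ (Fin.snoc ω φ : Fin (T + 1) → _)) x (T + 1) ⬝ᵥ y =
      deviation M (lift φ₀ ω) x T ⬝ᵥ ((M (T + 1)).matrix *ᵥ y) +
        (M (T + 1)).roundingError φ (loads M (lift φ₀ ω) x T) ⬝ᵥ y := by
  have h_loads : loads M (lift φ₀ (Fin.snoc ω φ : Fin (T + 1) → _)) x T = loads M (lift φ₀ ω) x T :=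
    loads_congr M x fun s hs => lift_snoc_of_mem_Icc φ₀ ω φ hs
  rw [deviation_succ, add_dotProduct, ← Matrix.dotProduct_mulVec, lift_snoc_succ, deviation,
    h_loads, deviation]

theorem expect_exp_deviation_dotProduct_le (φ₀ : Fin n → Fin n → Bool) (x : Fin n → ℤ) (T : ℕ)
    (y : Fin n → ℝ) :
    𝔼 ω : Fin T → Fin n → Fin n → Bool, Real.exp (deviation M (lift φ₀ ω) x T ⬝ᵥ y) ≤
      Real.exp ((∑ u, y u ^ 2) / 4) := by
  induction T generalizing y with
  | zero =>
    simp only [deviation_zero, zero_dotProduct, Real.exp_zero, Fintype.expect_const]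
    exact Real.one_le_exp (by positivity)
  | succ T ih =>
    set z := (M (T + 1)).matrix *ᵥ y
    rw [expect_fin_succ_fun]
    calc 𝔼 ω : Fin T → Fin n → Fin n → Bool, 𝔼 φ,
          Real.exp (deviation M (lift φ₀ (Fin.snoc ω φ : Fin (T + 1) → _)) x (T + 1) ⬝ᵥ y)
        = 𝔼 ω : Fin T → Fin n → Fin n → Bool, Real.exp (deviation M (lift φ₀ ω) x T ⬝ᵥ z) *
            𝔼 φ, Real.exp ((M (T + 1)).roundingError φ (loads M (lift φ₀ ω) x T) ⬝ᵥ y) := by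
          simp only [deviation_lift_snoc_dotProduct, Real.exp_add, Finset.mul_expect, z]
      _ ≤ 𝔼 ω : Fin T → Fin n → Fin n → Bool, Real.exp (deviation M (lift φ₀ ω) x T ⬝ᵥ z) *
            Real.exp ((∑ u, y u ^ 2 - ∑ u, z u ^ 2) / 4) := by
          refine Finset.expect_le_expect fun ω _ => ?_
          gcongr
          exact (M (T + 1)).expect_exp_roundingError_dotProduct_le _ y
      _ ≤ Real.exp ((∑ u, z u ^ 2) / 4) * Real.exp ((∑ u, y u ^ 2 - ∑ u, z u ^ 2) / 4) := by
          rw [← Finset.expect_mul]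
          gcongr
          exact ih z
      _ = Real.exp ((∑ u, y u ^ 2) / 4) := by
          rw [← Real.exp_add]
          congr 1
          ring

theorem pr_lt_abs_deviation_le (φ₀ : Fin n → Fin n → Bool) (x : Fin n → ℤ) (T : ℕ) (w : Fin n)
    {δ : ℝ} (hδ : 0 ≤ δ) :
    pr (fun ω : Fin T → Fin n → Fin n → Bool => δ < |deviation M (lift φ₀ ω) x T w|) ≤
      2 * Real.exp (-δ ^ 2) := by
  have mgf (l : ℝ) : 𝔼 ω : Fin T → Fin n → Fin n → Bool,
      Real.exp (l * deviation M (lift φ₀ ω) x T w) ≤ Real.exp (1 / 2 * l ^ 2 / 2) := by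
    convert expect_exp_deviation_dotProduct_le M φ₀ x T (Pi.single w l) using 2
    · simp [mul_comm]
    · simp only [Pi.single_apply, ite_pow, zero_pow two_ne_zero, Finset.sum_ite_eq',
        Finset.mem_univ, if_true]
      ring
  convert pr_lt_abs_le (c := 1 / 2) (by norm_num) hδ mgf using 3
  ring

theorem pr_exists_lt_abs_deviation_le (φ₀ : Fin n → Fin n → Bool) (x : Fin n → ℤ) (T : ℕ)
    {δ : ℝ} (hδ : 0 ≤ δ) :
    pr (fun ω : Fin T → Fin n → Fin n → Bool => ∃ w, δ < |deviation M (lift φ₀ ω) x T w|) ≤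
      2 * n * Real.exp (-δ ^ 2) := by
  refine (pr_exists_le _).trans
    ((Finset.sum_le_sum fun w _ => pr_lt_abs_deviation_le M φ₀ x T w hδ).trans_eq ?_)
  rw [Finset.sum_const, Finset.card_fin, nsmul_eq_mul]
  ring

end Deviation

/-! ### Discrepancy -/

theorem disc_nonneg (x : Fin n → ℝ) : 0 ≤ disc x :=
  Real.iSup_nonneg fun _ => Real.iSup_nonneg fun _ => abs_nonneg _

theorem abs_sub_le_disc (x : Fin n → ℝ) (u v : Fin n) : |x u - x v| ≤ disc x :=
  (le_ciSup (f := fun v => |x u - x v|) (Set.finite_range _).bddAbove v).trans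
    (le_ciSup (f := fun u => ⨆ v, |x u - x v|) (Set.finite_range _).bddAbove u)

theorem disc_le {x : Fin n → ℝ} {c : ℝ} (hc : 0 ≤ c) (h : ∀ u v, |x u - x v| ≤ c) : disc x ≤ c :=
  Real.iSup_le (fun u => Real.iSup_le (h u) hc) hc

theorem disc_le_disc_add {x y : Fin n → ℝ} {δ : ℝ} (hδ : 0 ≤ δ) (h : ∀ u, |x u - y u| ≤ δ) :
    disc x ≤ 2 * δ + disc y := by
  refine disc_le (add_nonneg (by positivity) (disc_nonneg y)) fun u v => ?_
  have hu := abs_le.1 (h u)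
  have hv := abs_le.1 (h v)
  have huv := abs_le.1 (abs_sub_le_disc y u v)
  exact abs_le.2 ⟨by linarith, by linarith⟩

theorem abs_dotProduct_le_disc (ξ : Fin n → ℝ) {z : Fin n → ℝ} (hz : ∑ u, z u = 0) :
    |ξ ⬝ᵥ z| ≤ √n * disc ξ * √(∑ u, z u ^ 2) := by
  rcases isEmpty_or_nonempty (Fin n) with _ | ⟨⟨v⟩⟩
  · simp [dotProduct]
  have centered : ξ ⬝ᵥ z = ∑ u, (ξ u - ξ v) * z u := by
    simp only [sub_mul, Finset.sum_sub_distrib, ← Finset.mul_sum, hz, mul_zero, sub_zero,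
      dotProduct]
  have sum_sq_le : ∑ u, (ξ u - ξ v) ^ 2 ≤ n * disc ξ ^ 2 := by
    simpa using Finset.sum_le_card_nsmul Finset.univ _ (disc ξ ^ 2) fun u _ =>
      sq_le_sq.2 ((abs_sub_le_disc ξ u v).trans (le_abs_self _))
  calc |ξ ⬝ᵥ z| ≤ √((∑ u, (ξ u - ξ v) ^ 2) * ∑ u, z u ^ 2) := by
        rw [centered]
        exact Real.abs_le_sqrt (Finset.sum_mul_sq_le_sq_mul_sq _ _ _)
    _ ≤ √(n * disc ξ ^ 2 * ∑ u, z u ^ 2) := by gcongr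
    _ = √n * disc ξ * √(∑ u, z u ^ 2) := by
        rw [Real.sqrt_mul (by positivity), Real.sqrt_mul (by positivity),
          Real.sqrt_sq (disc_nonneg ξ)]

theorem one_sub_le_pr_discZ_loads_le (M : ℕ → Matching n) (φ₀ : Fin n → Fin n → Bool) {T : ℕ}
    {K ε : ℝ} (hT : IsSmoothing M 0 T K ε) {x : Fin n → ℤ} (hx : discZ x ≤ K) {δ : ℝ}
    (hδ : 0 ≤ δ) :
    1 - 2 * n * Real.exp (-δ ^ 2) ≤
      pr (fun ω : Fin T → Fin n → Fin n → Bool =>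
        discZ (loads M (lift φ₀ ω) x T) ≤ 2 * δ + ε) := by
  calc 1 - 2 * n * Real.exp (-δ ^ 2)
      ≤ 1 - pr (fun ω : Fin T → Fin n → Fin n → Bool =>
          ∃ w, δ < |deviation M (lift φ₀ ω) x T w|) :=
        sub_le_sub_left (pr_exists_lt_abs_deviation_le M φ₀ x T hδ) 1
    _ = pr (fun ω : Fin T → Fin n → Fin n → Bool =>
          ¬∃ w, δ < |deviation M (lift φ₀ ω) x T w|) := (pr_not _).symm
    _ ≤ _ := pr_mono fun ω hω => by
        push Not at hω
        exact (disc_le_disc_add hδ hω).trans (add_le_add_right (hT _ hx) _)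

/-! ### Existence of a smoothing time -/

section Smoothing

theorem lamMax_nonneg (A : Matrix (Fin n) (Fin n) ℝ) : 0 ≤ lamMax A :=
  Real.iSup_nonneg fun _ => Real.sqrt_nonneg _

theorem bddAbove_range_sqrt_sum_sq_mulVec (A : Matrix (Fin n) (Fin n) ℝ) :
    BddAbove (Set.range fun x : {x : Fin n → ℝ // ∑ u, x u = 0 ∧ ∑ u, x u ^ 2 = 1} =>
      √(∑ u, (A *ᵥ x.1) u ^ 2)) := by
  refine ⟨√(∑ u, ∑ v, A u v ^ 2), ?_⟩
  rintro _ ⟨⟨x, -, hx⟩, rfl⟩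
  refine Real.sqrt_le_sqrt (Finset.sum_le_sum fun u _ => ?_)
  simpa only [hx, mul_one, Matrix.mulVec, dotProduct] using
    Finset.sum_mul_sq_le_sq_mul_sq Finset.univ (A u) x

theorem sqrt_sum_sq_smul (c : ℝ) (y : Fin n → ℝ) :
    √(∑ u, (c • y) u ^ 2) = |c| * √(∑ u, y u ^ 2) := by
  simp only [Pi.smul_apply, smul_eq_mul, mul_pow, ← Finset.mul_sum]
  rw [Real.sqrt_mul (sq_nonneg c), Real.sqrt_sq_eq_abs]

theorem sqrt_sum_sq_mulVec_le (A : Matrix (Fin n) (Fin n) ℝ) {y : Fin n → ℝ}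
    (hy : ∑ u, y u = 0) : √(∑ u, (A *ᵥ y) u ^ 2) ≤ lamMax A * √(∑ u, y u ^ 2) := by
  set r := √(∑ u, y u ^ 2) with hr
  rcases (Real.sqrt_nonneg _ : 0 ≤ r).eq_or_lt with hr0 | hr0
  · have hy0 : y = 0 := by
      have sum_sq_eq : ∑ u, y u ^ 2 = 0 :=
        (Real.sqrt_eq_zero (Finset.sum_nonneg fun u _ => sq_nonneg (y u))).1 hr0.symm
      ext u
      simpa using (Finset.sum_eq_zero_iff_of_nonneg fun u _ => sq_nonneg (y u)).1 sum_sq_eq u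
        (Finset.mem_univ u)
    simp [hr, hy0]
  · have sum_unit : ∑ u, (r⁻¹ • y) u = 0 := by
      simp [← Finset.mul_sum, hy]
    have norm_unit : ∑ u, (r⁻¹ • y) u ^ 2 = 1 := by
      rw [← Real.sqrt_eq_one, sqrt_sum_sq_smul, abs_of_pos (inv_pos.2 hr0), inv_mul_cancel₀ hr0.ne']
    have h_sup : √(∑ u, (A *ᵥ (r⁻¹ • y)) u ^ 2) ≤ lamMax A :=
      le_ciSup (bddAbove_range_sqrt_sum_sq_mulVec A) ⟨r⁻¹ • y, sum_unit, norm_unit⟩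
    rwa [Matrix.mulVec_smul, sqrt_sum_sq_smul, abs_of_pos (inv_pos.2 hr0), inv_mul_le_iff₀' hr0]
      at h_sup

theorem sum_mulVec_of_one_vecMul {A : Matrix (Fin n) (Fin n) ℝ} (hA : 1 ᵥ* A = 1)
    (y : Fin n → ℝ) : ∑ u, (A *ᵥ y) u = ∑ u, y u := by
  rw [← one_dotProduct, Matrix.dotProduct_mulVec, hA, one_dotProduct]

theorem one_vecMul_pow {A : Matrix (Fin n) (Fin n) ℝ} (hA : 1 ᵥ* A = 1) (k : ℕ) :
    1 ᵥ* A ^ k = 1 := by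
  induction k with
  | zero => exact Matrix.vecMul_one 1
  | succ k ih => rw [pow_succ, ← Matrix.vecMul_vecMul, ih, hA]

theorem sqrt_sum_sq_pow_mulVec_le {A : Matrix (Fin n) (Fin n) ℝ} (hA : 1 ᵥ* A = 1) (k : ℕ)
    {y : Fin n → ℝ} (hy : ∑ u, y u = 0) :
    √(∑ u, ((A ^ k) *ᵥ y) u ^ 2) ≤ lamMax A ^ k * √(∑ u, y u ^ 2) := by
  induction k generalizing y with
  | zero => simp
  | succ k ih =>
    rw [pow_succ, ← Matrix.mulVec_mulVec, pow_succ, mul_assoc]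
    exact (ih ((sum_mulVec_of_one_vecMul hA y).trans hy)).trans <|
      mul_le_mul_of_nonneg_left (sqrt_sum_sq_mulVec_le A hy) (pow_nonneg (lamMax_nonneg A) k)

theorem disc_vecMul_pow_le {A : Matrix (Fin n) (Fin n) ℝ} (hA : 1 ᵥ* A = 1) (ξ : Fin n → ℝ)
    (k : ℕ) : disc (ξ ᵥ* A ^ k) ≤ √n * disc ξ * (lamMax A ^ k * √2) := by
  have hdisc := disc_nonneg ξ
  have hlam := lamMax_nonneg A
  refine disc_le (by positivity) fun u v => ?_
  set y : Fin n → ℝ := Pi.single u 1 - Pi.single v 1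
  have sum_y : ∑ w, y w = 0 := by simp [y]
  have sum_y_sq : ∑ w, y w ^ 2 ≤ 2 := by
    have pointwise (w : Fin n) : y w ^ 2 ≤ (Pi.single u 1 + Pi.single v 1 : Fin n → ℝ) w := by
      simp only [y, Pi.sub_apply, Pi.add_apply, Pi.single_apply]
      split_ifs <;> norm_num
    refine (Finset.sum_le_sum fun w _ => pointwise w).trans_eq ?_
    simp [Finset.sum_add_distrib, one_add_one_eq_two]
  have sum_pow : ∑ w, (A ^ k *ᵥ y) w = 0 :=
    (sum_mulVec_of_one_vecMul (one_vecMul_pow hA k) y).trans sum_y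
  calc |(ξ ᵥ* A ^ k) u - (ξ ᵥ* A ^ k) v| = |ξ ⬝ᵥ (A ^ k *ᵥ y)| := by
        rw [Matrix.dotProduct_mulVec, dotProduct_sub, dotProduct_single_one, dotProduct_single_one]
    _ ≤ √n * disc ξ * √(∑ w, (A ^ k *ᵥ y) w ^ 2) := abs_dotProduct_le_disc ξ sum_pow
    _ ≤ √n * disc ξ * (lamMax A ^ k * √2) := by
        gcongr
        exact (sqrt_sum_sq_pow_mulVec_le hA k sum_y).trans (by gcongr)

variable {d : ℕ} (Ms : Fin d → Matching n)

theorem roundMatrix_mem_doublyStochastic : roundMatrix Ms ∈ doublyStochastic ℝ (Fin n) :=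
  Submonoid.list_prod_mem _ <| (List.forall_mem_ofFn_iff ..).2 fun i =>
    (Ms i).matrix_mem_doublyStochastic

theorem prodMatrix_circuit_mul (hd : 0 < d) (k : ℕ) :
    prodMatrix (circuit hd Ms) 1 (d * k) = roundMatrix Ms ^ k := by
  induction k with
  | zero => simp [prodMatrix]
  | succ k ih =>
    rw [pow_succ, ← ih, prodMatrix, prodMatrix, roundMatrix, Nat.add_sub_cancel,
      Nat.add_sub_cancel, Nat.mul_succ, ← List.range'_append_1, List.map_append, List.prod_append]
    congr 2
    refine List.ext_getElem (by simp) fun i hi _ => ?_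
    have hid : i < d := by simpa using hi
    have round_mod : (1 + d * k + i - 1) % d = i := by
      rw [show 1 + d * k + i - 1 = i + d * k by omega, Nat.add_mul_mod_self_left,
        Nat.mod_eq_of_lt hid]
    simp [circuit, round_mod]

theorem exists_isSmoothing_circuit (hd : 0 < d) (hlam : lamMax (roundMatrix Ms) < 1) (K : ℝ)
    {ε : ℝ} (hε : 0 < ε) : ∃ t, IsSmoothing (circuit hd Ms) 0 t K ε := by
  have h_lim : Tendsto (fun k => √n * K * (lamMax (roundMatrix Ms) ^ k * √2)) atTop (𝓝 0) := by
    simpa using ((tendsto_pow_atTop_nhds_zero_of_lt_one (lamMax_nonneg _) hlam).mul_const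
      √2).const_mul (√n * K)
  obtain ⟨k, hk⟩ := (h_lim.eventually_lt_const hε).exists
  refine ⟨d * k, fun ξ hξ => ?_⟩
  have hlam_nonneg := lamMax_nonneg (roundMatrix Ms)
  calc disc (ξ ᵥ* prodMatrix (circuit hd Ms) (0 + 1) (d * k))
      = disc (ξ ᵥ* roundMatrix Ms ^ k) := by rw [zero_add, prodMatrix_circuit_mul]
    _ ≤ √n * disc ξ * (lamMax (roundMatrix Ms) ^ k * √2) :=
        disc_vecMul_pow_le (one_vecMul_of_mem_doublyStochastic <|
          roundMatrix_mem_doublyStochastic Ms) ξ k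
    _ ≤ √n * K * (lamMax (roundMatrix Ms) ^ k * √2) := by gcongr
    _ ≤ ε := hk.le

end Smoothing

theorem stmt10_general (hn : 0 < n) (M : ℕ → Matching n) {T : ℕ} {K ε : ℝ}
    (hT : IsSmoothing M 0 T K ε) {x : Fin n → ℤ} (hx : discZ x ≤ K) :
    1 - 2 / (n : ℝ) ^ 2 ≤
      pr (fun ω : Fin T → Fin n → Fin n → Bool =>
        discZ (loads M (lift (orientDefault n) ω) x T) ≤ 12 * Real.sqrt (Real.log n) + ε) := by
  have one_le : (1 : ℝ) ≤ n := by exact_mod_cast hn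
  have tail : 2 * n * Real.exp (-(6 * √(Real.log n)) ^ 2) ≤ 2 / (n : ℝ) ^ 2 := by
    have exponent : (6 * √(Real.log n)) ^ 2 = Real.log ((n : ℝ) ^ 36) := by
      rw [mul_pow, Real.sq_sqrt (Real.log_nonneg one_le), Real.log_pow]
      norm_num
    rw [exponent, Real.exp_neg, Real.exp_log (by positivity), ← div_eq_mul_inv,
      div_le_div_iff₀ (by positivity) (by positivity)]
    calc 2 * (n : ℝ) * n ^ 2 = 2 * n ^ 3 := by ring
      _ ≤ 2 * (n : ℝ) ^ 36 := by
        gcongr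
        norm_num
  calc 1 - 2 / (n : ℝ) ^ 2 ≤ 1 - 2 * n * Real.exp (-(6 * √(Real.log n)) ^ 2) :=
        sub_le_sub_left tail 1
    _ ≤ _ := by
        convert one_sub_le_pr_discZ_loads_le M (orientDefault n) hT hx
          (by positivity : 0 ≤ 6 * √(Real.log n)) using 4
        ring

end Development

/-- Balancing circuit model, discrete process with independent
uniformly random orientations: for all sufficiently large `n`, after
`t = τ_cont(K,1)` rounds the discrepancy is at most `12√(log n) + 1` with
probability at least `1 - 2n⁻²`. -/
theorem stmt10 :
    ∃ N₀ : ℕ, ∀ n : ℕ, N₀ ≤ n →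
    ∀ d : ℕ, ∀ hd : 0 < d, ∀ Ms : Fin d → Matching n,
    lamMax (roundMatrix Ms) < 1 →
    ∀ K : ℝ, 1 ≤ K → ∀ x : Fin n → ℤ, discZ x ≤ K →
    1 - 2 / (n : ℝ) ^ 2 ≤
      pr (fun ω : Fin (tauCont (circuit hd Ms) K 1) → Fin n → Fin n → Bool =>
        discZ (loads (circuit hd Ms) (lift (orientDefault n) ω) x
            (tauCont (circuit hd Ms) K 1))
          ≤ 12 * Real.sqrt (Real.log n) + 1) := by
  refine ⟨1, fun n hn d hd Ms hlam K _ x hx => stmt10_general hn _ ?_ hx⟩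
  exact Nat.sInf_mem (exists_isSmoothing_circuit Ms hd hlam K one_pos)

end LB
end

section
/- Fix a sequence of matchings and a non-negative integer load vector at the end of round t₁, and run the token process. For any token i located at node u = w_i^{(t₁)} at the end of round t₁ and any round t₂ ≥ t₁, P( w_i^{(t₂)} = v ) = M^{[t₁+1,t₂]}_{u,v} for every node v; more generally, for any set D ⊆ V, P( w_i^{(t₂)} ∈ D ) = M^{[t₁+1,t₂]}_{u,D}. -/
namespace LB


/-- One round of the token process.  For each matched pair `{u,v}` (with `u < v`),
all tokens currently at `u` or `v` are pooled; node `u` receives the `k` tokens of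
smallest `π`-rank from the pool, where `k = ⌈pool/2⌉` if the orientation bit
`φ u v` is `true` and `k = ⌊pool/2⌋` otherwise, and `v` receives the rest.
A single uniformly random permutation `π` of all tokens induces an independent,
uniformly random draw (without replacement) inside each pool. -/
def tokenStep {n N : ℕ} (m : Matching n) (φ : Fin n → Fin n → Bool)
    (π : Equiv.Perm (Fin N)) (w : Fin N → Fin n) : Fin N → Fin n := fun i =>
  if m.f (w i) = w i then w i
  else
    let u : Fin n := if w i < m.f (w i) then w i else m.f (w i)
    let v : Fin n := if w i < m.f (w i) then m.f (w i) else w i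
    let P : Finset (Fin N) := Finset.univ.filter fun j => w j = u ∨ w j = v
    let k : ℕ := if φ u v then (P.card + 1) / 2 else P.card / 2
    if (P.filter fun j => π j < π i).card < k then u else v

/-- The token process started at round `t₁` from the placement `w` of the tokens:
`tokensFrom M t₁ R w r i` is the node hosting token `i` after `r` further rounds;
the `(r+1)`-st step uses the matching `M (t₁+r+1)` and the random choices `R (r+1)`
(an orientation bit for every pair together with a random permutation of the tokens). -/
def tokensFrom {n N : ℕ} (M : ℕ → Matching n) (t₁ : ℕ)
    (R : ℕ → (Fin n → Fin n → Bool) × Equiv.Perm (Fin N)) (w : Fin N → Fin n) :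
    ℕ → Fin N → Fin n
  | 0 => w
  | r + 1 => tokenStep (M (t₁ + r + 1)) (R (r + 1)).1 (R (r + 1)).2 (tokensFrom M t₁ R w r)

/-!
Reversing the orientation of every edge together with the rank order of the tokens is a bijection
of the random choices of one round, and it exchanges the two possible destinations `u`, `m.f u` of
a token at `u`: among `p` pooled tokens, having rank below `⌈p/2⌉` in one order is the same as
having rank at least `⌊p/2⌋` in the reversed one. Averaging a choice with its reversal, the
expectation of `g` at the new position is `(g u + g (m.f u)) / 2`, that is `(m.matrix *ᵥ g) u`.
The choices of different rounds being independent, these averages compose to the matrix product.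
-/

open Matrix

section UniformExpectation

variable {Ω Ω' A : Type*} [Fintype Ω] [Fintype Ω'] [Fintype A]

theorem ex_const [Nonempty Ω] (c : ℝ) : ex (fun _ : Ω => c) = c := by
  simp [ex]

theorem ex_add (Y Z : Ω → ℝ) : ex (fun ω => Y ω + Z ω) = ex Y + ex Z := by
  simp only [ex, Finset.sum_add_distrib, add_div]

theorem ex_comp_equiv (e : Ω ≃ Ω') (Z : Ω' → ℝ) : ex (fun ω => Z (e ω)) = ex Z := by
  rw [ex, ex, e.sum_comp, Fintype.card_congr e]

theorem ex_prod_right (Z : Ω × Ω' → ℝ) : ex Z = ex fun ω' => ex fun ω => Z (ω, ω') := by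
  simp only [ex, Fintype.sum_prod_type_right, Fintype.card_prod, Nat.cast_mul,
    ← Finset.sum_div, div_div]

theorem ex_snoc {r : ℕ} (Z : (Fin (r + 1) → A) → ℝ) :
    ex Z = ex fun ω : Fin r → A => ex fun a => Z (Fin.snoc ω a) := by
  rw [← ex_comp_equiv (Fin.snocEquiv fun _ => A) Z, ex_prod_right]
  rfl

theorem ex_eq_half_of_add_comp_equiv [Nonempty Ω] (σ : Ω ≃ Ω) {Z : Ω → ℝ} {c : ℝ}
    (h : ∀ ω, Z ω + Z (σ ω) = c) : ex Z = c / 2 := by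
  have hsum : ex Z + ex Z = c := by
    calc ex Z + ex Z = ex Z + ex (fun ω => Z (σ ω)) := by rw [ex_comp_equiv]
      _ = ex (fun ω => Z ω + Z (σ ω)) := (ex_add _ _).symm
      _ = c := by simp only [h, ex_const]
  linarith

theorem pr_mem_eq_ex {α : Type*} [DecidableEq α] (X : Ω → α) (D : Finset α) :
    pr (fun ω => X ω ∈ D) = ex fun ω => if X ω ∈ D then 1 else 0 := by
  rw [pr, ex, Finset.sum_boole]
  congr!

end UniformExpectation

section MatchingMatrix

variable {n : ℕ}

theorem Matching.matrix_mulVec (m : Matching n) (g : Fin n → ℝ) (u : Fin n) :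
    (m.matrix *ᵥ g) u = (g u + g (m.f u)) / 2 := by
  by_cases hu : m.f u = u
  · simp [mulVec, dotProduct, matrix, hu]
  · have hterm : ∀ v, m.matrix u v * g v
        = (if v = u then g v / 2 else 0) + (if v = m.f u then g v / 2 else 0) := by
      intro v
      simp only [matrix, of_apply, if_neg hu]
      grind
    simp only [mulVec, dotProduct, hterm, Finset.sum_add_distrib, Finset.sum_ite_eq',
      Finset.mem_univ, if_true, add_div]

theorem prodMatrix_self_succ (M : ℕ → Matching n) (t : ℕ) : prodMatrix M (t + 1) t = 1 := by
  simp [prodMatrix]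

theorem prodMatrix_succ_right (M : ℕ → Matching n) {t₁ t₂ : ℕ} (h : t₁ ≤ t₂ + 1) :
    prodMatrix M t₁ (t₂ + 1) = prodMatrix M t₁ t₂ * (M (t₂ + 1)).matrix := by
  have hlength : t₂ + 1 + 1 - t₁ = (t₂ + 1 - t₁) + 1 := by omega
  have hlast : t₁ + (t₂ + 1 - t₁) = t₂ + 1 := by omega
  simp [prodMatrix, hlength, List.range'_concat, hlast]

end MatchingMatrix

section Rank

variable {α β : Type*} [LinearOrder β]

/-- The rank of `i` in the pool `P`, ordered by the values of `f`; ranks start at `0`. -/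
def rankIn (f : α → β) (P : Finset α) (i : α) : ℕ := (P.filter fun j => f j < f i).card

theorem rankIn_add_rankIn_toDual {f : α → β} {P : Finset α} (hf : Set.InjOn f P) {i : α}
    (hi : i ∈ P) : rankIn f P i + rankIn (OrderDual.toDual ∘ f) P i + 1 = P.card := by
  classical
  have hge : P.filter (fun j => ¬ f j < f i) = insert i (P.filter fun j => f i < f j) := by
    ext j
    have hinj : j ∈ P → f j = f i → j = i := fun hj => hf hj hi
    grind
  have hcard := Finset.card_filter_add_card_filter_not (s := P) fun j => f j < f i
  rw [hge, Finset.card_insert_of_notMem (by simp)] at hcard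
  exact hcard

end Rank

section TokenStep

variable {n N : ℕ}

/-- The tokens pooled at the nodes `u` and `v` under the placement `w`. -/
def pool (w : Fin N → Fin n) (u v : Fin n) : Finset (Fin N) :=
  Finset.univ.filter fun j => w j = u ∨ w j = v

/-- The number of tokens that the smaller node of a matched pair draws from a pool of `p` tokens:
`⌈p/2⌉` or `⌊p/2⌋`, depending on the orientation `b`. -/
def share (b : Bool) (p : ℕ) : ℕ := if b then (p + 1) / 2 else p / 2

theorem share_add_share_not (b : Bool) (p : ℕ) : share b p + share (!b) p = p := by
  cases b <;> simp only [share, Bool.not_true, Bool.not_false, Bool.false_eq_true, if_true,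
    if_false] <;> omega

theorem tokenStep_of_fixed {m : Matching n} {w : Fin N → Fin n} {i : Fin N}
    (h : m.f (w i) = w i) (φ : Fin n → Fin n → Bool) (π : Equiv.Perm (Fin N)) :
    tokenStep m φ π w i = w i :=
  if_pos h

theorem tokenStep_of_matched {m : Matching n} {w : Fin N → Fin n} {i : Fin N} {u v : Fin n}
    (huv : u < v) (hu : m.f u = v) (hi : w i = u ∨ w i = v)
    (φ : Fin n → Fin n → Bool) (π : Equiv.Perm (Fin N)) :
    tokenStep m φ π w i =
      if rankIn π (pool w u v) i < share (φ u v) (pool w u v).card then u else v := by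
  have hv : m.f v = u := by rw [← hu, m.invol]
  rcases hi with hi | hi
  · simp only [tokenStep, hi, hu, huv.ne', huv, if_true, if_false]
    rfl
  · simp only [tokenStep, hi, hv, huv.ne, huv.not_gt, if_false]
    rfl

theorem tokenStep_eq_or_eq (m : Matching n) (φ : Fin n → Fin n → Bool) (π : Equiv.Perm (Fin N))
    (w : Fin N → Fin n) (i : Fin N) :
    tokenStep m φ π w i = w i ∨ tokenStep m φ π w i = m.f (w i) := by
  unfold tokenStep
  dsimp only
  split_ifs <;> simp

/-- The random choices of one round: an orientation bit for every pair of nodes and a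
permutation of the tokens. -/
abbrev RoundChoice (n N : ℕ) : Type := (Fin n → Fin n → Bool) × Equiv.Perm (Fin N)

/-- The choice with all orientations flipped and the order of the tokens reversed. -/
def RoundChoice.reverse (c : RoundChoice n N) : RoundChoice n N :=
  (fun u v => !c.1 u v, c.2.trans Fin.revPerm)

theorem RoundChoice.reverse_involutive :
    Function.Involutive (reverse : RoundChoice n N → RoundChoice n N) := by
  intro c
  ext <;> simp [reverse]

theorem rankIn_add_rankIn_revPerm (π : Equiv.Perm (Fin N)) {P : Finset (Fin N)} {i : Fin N}
    (hi : i ∈ P) : rankIn π P i + rankIn (π.trans Fin.revPerm) P i + 1 = P.card := by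
  rw [← rankIn_add_rankIn_toDual π.injective.injOn hi]
  simp [rankIn]

theorem tokenStep_reverse (m : Matching n) (c : RoundChoice n N) (w : Fin N → Fin n)
    (i : Fin N) :
    tokenStep m c.reverse.1 c.reverse.2 w i = m.f (tokenStep m c.1 c.2 w i) := by
  obtain ⟨φ, π⟩ := c
  by_cases hfix : m.f (w i) = w i
  · simp only [tokenStep_of_fixed hfix, hfix]
  obtain ⟨u, v, huv, hu, hi⟩ : ∃ u v, u < v ∧ m.f u = v ∧ (w i = u ∨ w i = v) := by
    rcases lt_or_gt_of_ne hfix with hlt | hlt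
    · exact ⟨m.f (w i), w i, hlt, m.invol _, .inr rfl⟩
    · exact ⟨w i, m.f (w i), hlt, rfl, .inl rfl⟩
  have hv : m.f v = u := by rw [← hu, m.invol]
  have hrank := rankIn_add_rankIn_revPerm π (P := pool w u v) (i := i) (by simpa [pool] using hi)
  have hshare := share_add_share_not (φ u v) (pool w u v).card
  have hswap : rankIn (π.trans Fin.revPerm) (pool w u v) i
        < share (!φ u v) (pool w u v).card
      ↔ ¬ rankIn π (pool w u v) i < share (φ u v) (pool w u v).card := by
    omega
  simp only [tokenStep_of_matched huv hu hi, RoundChoice.reverse, hswap]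
  split_ifs <;> simp only [hu, hv]

theorem ex_tokenStep (m : Matching n) (w : Fin N → Fin n) (i : Fin N) (g : Fin n → ℝ) :
    ex (fun c : RoundChoice n N => g (tokenStep m c.1 c.2 w i)) = (m.matrix *ᵥ g) (w i) := by
  rw [m.matrix_mulVec]
  refine ex_eq_half_of_add_comp_equiv RoundChoice.reverse_involutive.toPerm fun c => ?_
  rw [Function.Involutive.coe_toPerm, tokenStep_reverse]
  rcases tokenStep_eq_or_eq m c.1 c.2 w i with h | h <;> rw [h]
  rw [m.invol, add_comm]

end TokenStep

section TokenProcess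

variable {A : Type*} {n N : ℕ}

theorem lift_snoc_of_lt (a₀ : A) {r : ℕ} (ω : Fin r → A) (a : A) {s : ℕ} (hs : s - 1 < r) :
    lift a₀ (Fin.snoc ω a : Fin (r + 1) → A) s = lift a₀ ω s := by
  simp [lift, Fin.snoc, hs, hs.trans r.lt_succ_self]

theorem lift_snoc_last (a₀ : A) {r : ℕ} (ω : Fin r → A) (a : A) :
    lift a₀ (Fin.snoc ω a : Fin (r + 1) → A) (r + 1) = a := by
  simp [lift, Fin.snoc]

theorem tokensFrom_congr (M : ℕ → Matching n) (t : ℕ) {R R' : ℕ → RoundChoice n N}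
    (w : Fin N → Fin n) {r : ℕ} (h : ∀ s, 1 ≤ s → s ≤ r → R s = R' s) :
    tokensFrom M t R w r = tokensFrom M t R' w r := by
  induction r with
  | zero => rfl
  | succ r ih =>
    simp only [tokensFrom]
    rw [ih fun s h₁ h₂ => h s h₁ (h₂.trans r.le_succ), h (r + 1) (by omega) le_rfl]

theorem tokensFrom_lift_snoc (M : ℕ → Matching n) (t : ℕ) (a₀ : RoundChoice n N) {r : ℕ}
    (ω : Fin r → RoundChoice n N) (c : RoundChoice n N) (w : Fin N → Fin n) :
    tokensFrom M t (lift a₀ (Fin.snoc ω c : Fin (r + 1) → RoundChoice n N)) w (r + 1)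
      = tokenStep (M (t + r + 1)) c.1 c.2 (tokensFrom M t (lift a₀ ω) w r) := by
  rw [tokensFrom, lift_snoc_last,
    tokensFrom_congr M t w fun s h₁ h₂ => lift_snoc_of_lt a₀ ω c (by omega)]

theorem ex_tokensFrom (M : ℕ → Matching n) (t : ℕ) (a₀ : RoundChoice n N) (w : Fin N → Fin n)
    (i : Fin N) (r : ℕ) (g : Fin n → ℝ) :
    ex (fun ω : Fin r → RoundChoice n N => g (tokensFrom M t (lift a₀ ω) w r i))
      = (prodMatrix M (t + 1) (t + r) *ᵥ g) (w i) := by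
  induction r generalizing g with
  | zero => simp only [tokensFrom, ex_const, add_zero, prodMatrix_self_succ, one_mulVec]
  | succ r ih =>
    simp only [ex_snoc, tokensFrom_lift_snoc, ex_tokenStep]
    rw [ih, mulVec_mulVec, ← add_assoc, prodMatrix_succ_right M (by omega)]

theorem pr_tokensFrom_mem (M : ℕ → Matching n) (t : ℕ) (a₀ : RoundChoice n N)
    (w : Fin N → Fin n) (i : Fin N) (r : ℕ) (D : Finset (Fin n)) :
    pr (fun ω : Fin r → RoundChoice n N => tokensFrom M t (lift a₀ ω) w r i ∈ D)
      = ∑ v ∈ D, prodMatrix M (t + 1) (t + r) (w i) v := by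
  rw [pr_mem_eq_ex, ex_tokensFrom M t a₀ w i r fun v => if v ∈ D then 1 else 0]
  simp [mulVec, dotProduct]

end TokenProcess

/-- In the token process (run from round `t₁` with independent
uniformly random orientations and draws), each token performs a random walk w.r.t.
the matching matrices:  `P(w_i^{(t₂)} = v) = M^{[t₁+1,t₂]}_{w_i^{(t₁)},v}` and
`P(w_i^{(t₂)} ∈ D) = M^{[t₁+1,t₂]}_{w_i^{(t₁)},D}`. -/
theorem stmt11 {n N : ℕ} (hn : 0 < n) (M : ℕ → Matching n) (t₁ t₂ : ℕ)
    (h : t₁ ≤ t₂) (w0 : Fin N → Fin n) (i : Fin N) :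
    (∀ v : Fin n,
      pr (fun ω : Fin (t₂ - t₁) → (Fin n → Fin n → Bool) × Equiv.Perm (Fin N) =>
          tokensFrom M t₁ (lift (orientDefault n, Equiv.refl (Fin N)) ω) w0
            (t₂ - t₁) i = v)
        = prodMatrix M (t₁ + 1) t₂ (w0 i) v) ∧
    (∀ D : Finset (Fin n),
      pr (fun ω : Fin (t₂ - t₁) → (Fin n → Fin n → Bool) × Equiv.Perm (Fin N) =>
          tokensFrom M t₁ (lift (orientDefault n, Equiv.refl (Fin N)) ω) w0
            (t₂ - t₁) i ∈ D)
        = ∑ v ∈ D, prodMatrix M (t₁ + 1) t₂ (w0 i) v) := by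
  obtain ⟨r, rfl⟩ := Nat.exists_eq_add_of_le h
  rw [Nat.add_sub_cancel_left]
  have hmem := pr_tokensFrom_mem M t₁ (orientDefault n, Equiv.refl (Fin N)) w0 i r
  exact ⟨fun v => by simpa only [Finset.mem_singleton, Finset.sum_singleton] using hmem {v}, hmem⟩

end LB
end
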